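/- For the 3-dimensional complex Heisenberg Leibniz algebra l_3^{J_a} with a ≠ 0 (basis e, f, z; [e,f] = (1+a)z, [f,e] = (−1+a)z), the Lie algebra of derivations has dimension 4: a linear map d is a derivation if and only if d(e) = αe + μz, d(f) = βf + νz, d(z) = (α+β)z for some scalars α, β, μ, ν. -/

import Mathlib

/-- Underlying space of the Heisenberg Leibniz algebra `l_3^{J_a}`,
coordinates in the basis `{e, f, z}`. -/
abbrev L3 := ℂ × ℂ × ℂ

/-- The bracket of `l_3^{J_a}`: `[e,f] = (1+a)z`, `[f,e] = (-1+a)z`. -/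
def br3 (a : ℂ) (x y : L3) : L3 :=
  (0, 0, (1 + a) * x.1 * y.2.1 + (-1 + a) * x.2.1 * y.1)

def e3 : L3 := (1, 0, 0)
def f3 : L3 := (0, 1, 0)
def z3 : L3 := (0, 0, 1)

/-!
A derivation respects the anticommutator `[x,y] + [y,x]`, and when `[e,f] = pz`, `[f,e] = qz` this
is `(p + q)(x₁y₂ + x₂y₁)z`, where `x₁`, `x₂` are the coordinates of `x` along `e` and `f`.
Differentiating `[e,e] = 0` and `[f,f] = 0` kills the `f`-coordinate of `d(e)` and the
`e`-coordinate of `d(f)`, and differentiating `[e,f] + [f,e] = (p + q)z` determines `d(z)`, as soon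
as `p + q` can be cancelled. For `l_3^{J_a}` one has `p + q = 2a`.
-/

section Derivation

variable {R M : Type*} [Semiring R] [AddCommMonoid M] [Module R M]

/-- A linear map satisfying the Leibniz rule for a product `br`. The product is an arbitrary binary
operation, so that unbundled brackets such as `br3` are covered. -/
def IsDerivation (br : M → M → M) (d : M →ₗ[R] M) : Prop :=
  ∀ x y, d (br x y) = br (d x) y + br x (d y)

lemma IsDerivation.map_anticommutator {br : M → M → M} {d : M →ₗ[R] M} (hd : IsDerivation br d)
    (x y : M) :
    d (br x y + br y x) = (br (d x) y + br y (d x)) + (br x (d y) + br (d y) x) := by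
  rw [map_add, hd, hd]
  abel

end Derivation

section Heisenberg

variable {R : Type*} [CommRing R]

/-- The bracket on `R³`, in coordinates for a basis `{e, f, z}`, whose only nonzero values on basis
vectors are `[e,f] = pz` and `[f,e] = qz`; thus `br3 a` is the case `p = 1 + a`, `q = -1 + a`. -/
def heisenbergBracket (p q : R) (x y : R × R × R) : R × R × R :=
  (0, 0, p * x.1 * y.2.1 + q * x.2.1 * y.1)

lemma heisenbergBracket_add_swap (p q : R) (x y : R × R × R) :
    heisenbergBracket p q x y + heisenbergBracket p q y x =
      (p + q) • (0, 0, x.1 * y.2.1 + x.2.1 * y.1) := by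
  ext <;> simp only [heisenbergBracket, Prod.mk_add_mk, Prod.smul_mk, smul_eq_mul] <;> ring

/-- The linear map `e ↦ αe + μz`, `f ↦ βf + νz`, `z ↦ (α + β)z` on `R³`, depending linearly on its
vector of coefficients `c = (α, β, μ, ν)`. -/
def heisenbergDerivation : (Fin 4 → R) →ₗ[R] R × R × R →ₗ[R] R × R × R :=
  LinearMap.mk₂ R
    (fun c x ↦ (c 0 * x.1, c 1 * x.2.1, c 2 * x.1 + c 3 * x.2.1 + (c 0 + c 1) * x.2.2))
    (by intros; ext <;> simp <;> ring)
    (by intros; ext <;> simp <;> ring)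
    (by intros; ext <;> simp <;> ring)
    (by intros; ext <;> simp <;> ring)

lemma heisenbergDerivation_apply (c : Fin 4 → R) (x : R × R × R) :
    heisenbergDerivation c x =
      (c 0 * x.1, c 1 * x.2.1, c 2 * x.1 + c 3 * x.2.1 + (c 0 + c 1) * x.2.2) :=
  rfl

lemma heisenbergDerivation_eq_iff {c : Fin 4 → R} {d : R × R × R →ₗ[R] R × R × R} :
    heisenbergDerivation c = d ↔
      d (1, 0, 0) = (c 0, 0, c 2) ∧ d (0, 1, 0) = (0, c 1, c 3) ∧
        d (0, 0, 1) = (0, 0, c 0 + c 1) := by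
  simp [LinearMap.prod_ext_iff, LinearMap.ext_ring_iff, Prod.zero_eq_mk,
    heisenbergDerivation_apply, eq_comm]

lemma mem_range_heisenbergDerivation {d : R × R × R →ₗ[R] R × R × R} :
    d ∈ LinearMap.range heisenbergDerivation ↔
      ∃ α β μ ν : R,
        d (1, 0, 0) = (α, 0, μ) ∧ d (0, 1, 0) = (0, β, ν) ∧ d (0, 0, 1) = (0, 0, α + β) := by
  simp only [LinearMap.mem_range, heisenbergDerivation_eq_iff]
  exact ⟨fun ⟨c, hc⟩ ↦ ⟨c 0, c 1, c 2, c 3, hc⟩, fun ⟨α, β, μ, ν, h⟩ ↦ ⟨![α, β, μ, ν], h⟩⟩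

lemma heisenbergDerivation_injective : Function.Injective (heisenbergDerivation (R := R)) := by
  intro c c' h
  obtain ⟨he, hf, -⟩ := heisenbergDerivation_eq_iff.mp h
  simp only [heisenbergDerivation_apply, Prod.mk.injEq, mul_one, mul_zero, add_zero, zero_add]
    at he hf
  funext i
  fin_cases i
  exacts [he.1.symm, hf.2.1.symm, he.2.2.symm, hf.2.2.symm]

lemma isDerivation_heisenbergDerivation (p q : R) (c : Fin 4 → R) :
    IsDerivation (heisenbergBracket p q) (heisenbergDerivation c) := by
  intro x y
  ext <;> simp only [heisenbergDerivation_apply, heisenbergBracket, Prod.mk_add_mk] <;> ring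

section Leibniz

variable {p q : R} {d : R × R × R →ₗ[R] R × R × R}

lemma IsDerivation.mul_add_mul_eq_zero (hpq : IsSMulRegular R (p + q))
    (hd : IsDerivation (heisenbergBracket p q) d) {x : R × R × R}
    (hx : heisenbergBracket p q x x = 0) :
    x.1 * (d x).2.1 + x.2.1 * (d x).1 = 0 := by
  have h : (p + q) • ((0, 0, x.1 * (d x).2.1 + x.2.1 * (d x).1) : R × R × R) = 0 := by
    rw [← heisenbergBracket_add_swap, add_comm, ← hd, hx, map_zero]
  exact hpq.right_eq_zero_of_smul (congrArg (·.2.2) h)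

lemma IsDerivation.map_e (hpq : IsSMulRegular R (p + q))
    (hd : IsDerivation (heisenbergBracket p q) d) :
    d (1, 0, 0) = ((d (1, 0, 0)).1, 0, (d (1, 0, 0)).2.2) := by
  have h : (d (1, 0, 0)).2.1 = 0 := by
    simpa using hd.mul_add_mul_eq_zero hpq (x := (1, 0, 0)) (by simp [heisenbergBracket])
  exact Prod.ext rfl (Prod.ext h rfl)

lemma IsDerivation.map_f (hpq : IsSMulRegular R (p + q))
    (hd : IsDerivation (heisenbergBracket p q) d) :
    d (0, 1, 0) = (0, (d (0, 1, 0)).2.1, (d (0, 1, 0)).2.2) := by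
  have h : (d (0, 1, 0)).1 = 0 := by
    simpa using hd.mul_add_mul_eq_zero hpq (x := (0, 1, 0)) (by simp [heisenbergBracket])
  exact Prod.ext h rfl

lemma IsDerivation.map_z (hpq : IsSMulRegular R (p + q))
    (hd : IsDerivation (heisenbergBracket p q) d) :
    d (0, 0, 1) = (0, 0, (d (1, 0, 0)).1 + (d (0, 1, 0)).2.1) := by
  have hreg : IsSMulRegular (R × R × R) (p + q) :=
    Prod.isSMulRegular_iff.mpr ⟨hpq, Prod.isSMulRegular_iff.mpr ⟨hpq, hpq⟩⟩
  apply hreg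
  calc
    (p + q) • d (0, 0, 1)
    _ = d (heisenbergBracket p q (1, 0, 0) (0, 1, 0) +
          heisenbergBracket p q (0, 1, 0) (1, 0, 0)) := by
      simp [heisenbergBracket_add_swap, -Prod.smul_mk]
    _ = (heisenbergBracket p q (d (1, 0, 0)) (0, 1, 0) +
          heisenbergBracket p q (0, 1, 0) (d (1, 0, 0))) +
        (heisenbergBracket p q (1, 0, 0) (d (0, 1, 0)) +
          heisenbergBracket p q (d (0, 1, 0)) (1, 0, 0)) :=
      hd.map_anticommutator _ _
    _ = (p + q) • (0, 0, (d (1, 0, 0)).1 + (d (0, 1, 0)).2.1) := by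
      simp [heisenbergBracket_add_swap, mul_add]

end Leibniz

theorem isDerivation_heisenbergBracket_iff {p q : R} (hpq : IsSMulRegular R (p + q))
    {d : R × R × R →ₗ[R] R × R × R} :
    IsDerivation (heisenbergBracket p q) d ↔ d ∈ LinearMap.range heisenbergDerivation := by
  constructor
  · intro hd
    exact mem_range_heisenbergDerivation.mpr
      ⟨_, _, _, _, hd.map_e hpq, hd.map_f hpq, hd.map_z hpq⟩
  · rintro ⟨c, rfl⟩
    exact isDerivation_heisenbergDerivation p q c

theorem l3_derivations_general [Nontrivial R] {p q : R} (hpq : IsSMulRegular R (p + q)) :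
    (∀ d : R × R × R →ₗ[R] R × R × R,
      IsDerivation (heisenbergBracket p q) d ↔
      ∃ α β μ ν : R,
        d (1, 0, 0) = (α, 0, μ) ∧ d (0, 1, 0) = (0, β, ν) ∧ d (0, 0, 1) = (0, 0, α + β)) ∧
    Module.finrank R
      (Submodule.span R {d : R × R × R →ₗ[R] R × R × R |
        IsDerivation (heisenbergBracket p q) d}) = 4 := by
  have hrange : {d : R × R × R →ₗ[R] R × R × R | IsDerivation (heisenbergBracket p q) d} =
      (LinearMap.range (heisenbergDerivation (R := R)) : Set (R × R × R →ₗ[R] R × R × R)) :=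
    Set.ext fun _ ↦ isDerivation_heisenbergBracket_iff hpq
  refine ⟨fun d ↦ (isDerivation_heisenbergBracket_iff hpq).trans mem_range_heisenbergDerivation, ?_⟩
  rw [hrange, Submodule.span_eq, LinearMap.finrank_range_of_inj heisenbergDerivation_injective,
    Module.finrank_fin_fun]

end Heisenberg

/-- For `l_3^{J_a}` with `a ≠ 0`, a linear map `d` is a derivation if and only if
`d(e) = α e + μ z`, `d(f) = β f + ν z`, `d(z) = (α+β) z` for some scalars `α β μ ν`;
hence the Lie algebra of derivations has dimension 4. -/
theorem l3_derivations
    (a : ℂ) (ha : a ≠ 0) :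
    (∀ d : L3 →ₗ[ℂ] L3,
      (∀ x y : L3, d (br3 a x y) = br3 a (d x) y + br3 a x (d y)) ↔
      ∃ α β μ ν : ℂ,
        d e3 = α • e3 + μ • z3 ∧ d f3 = β • f3 + ν • z3 ∧ d z3 = (α + β) • z3) ∧
    Module.finrank ℂ
      (Submodule.span ℂ {d : L3 →ₗ[ℂ] L3 |
        ∀ x y : L3, d (br3 a x y) = br3 a (d x) y + br3 a x (d y)}) = 4 := by
  have h2a : (1 + a) + (-1 + a) ≠ 0 := fun h ↦ ha (by linear_combination h / 2)
  exact (l3_derivations_general ((IsUnit.mk0 _ h2a).isSMulRegular ℂ)).imp_left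
    fun h d ↦ (h d).trans (by simp [e3, f3, z3])
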